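/- arXiv:0808.3402 — 2 statements merged into one kernel-verified Lean document; each statement's English description precedes it below -/
import Mathlib

section
/- Let ν > 0, k > 0, and let r_{ν,k} be as defined. Then lim_{t→0⁺} r_{ν,k}(t) = max(1 − k^{−2ν}, 0), i.e. the call price converges to (1 − K)^+ with K = k^{−2ν} as maturity tends to 0. -/
open MeasureTheory Real Filter Set Topology

/-- The modified Bessel function of the first kind, defined by its series:
`I_ν(y) = Σ_{j=0}^∞ (y/2)^{ν+2j} / (j!·Γ(ν+j+1))`. -/
noncomputable def besselI (ν y : ℝ) : ℝ :=
  ∑' j : ℕ, (y / 2) ^ (ν + 2 * (j : ℝ)) / ((Nat.factorial j : ℝ) * Real.Gamma (ν + (j : ℝ) + 1))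

/-- The explicit integral formula for the Bessel(δ) call price, `δ = 2ν+2`, strike `K = k^{−2ν}`:
`r_{ν,k}(t) = ν·k^{−ν}·∫_0^{k/t} y^{−1}·e^{−y/(2k)}·[ y^ν/(2^ν Γ(1+ν)) − e^{−ky/2}·I_ν(y) ] dy`. -/
noncomputable def rBes (ν k t : ℝ) : ℝ :=
  ν * k ^ (-ν) *
    ∫ y in (0:ℝ)..(k / t),
      y⁻¹ * Real.exp (-y / (2 * k)) *
        (y ^ ν / ((2:ℝ) ^ ν * Real.Gamma (1 + ν)) - Real.exp (-(k * y) / 2) * besselI ν y)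




noncomputable def acf (ν : ℝ) (j : ℕ) : ℝ :=
  Real.Gamma (ν + 2 * (j:ℝ)) / ((Nat.factorial j : ℝ) * Real.Gamma (ν + (j:ℝ) + 1))

lemma acf_pos {ν : ℝ} (hν : 0 < ν) (j : ℕ) : 0 < acf ν j := by
  unfold acf
  have h1 : 0 < Real.Gamma (ν + 2 * (j:ℝ)) := Real.Gamma_pos_of_pos (by positivity)
  have h2 : 0 < Real.Gamma (ν + (j:ℝ) + 1) := Real.Gamma_pos_of_pos (by positivity)
  positivity

lemma acf_zero {ν : ℝ} (hν : 0 < ν) : acf ν 0 = 1 / ν := by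
  unfold acf
  have h1 : 0 < Real.Gamma ν := Real.Gamma_pos_of_pos hν
  simp [Real.Gamma_add_one hν.ne']
  field_simp

lemma acf_succ {ν : ℝ} (hν : 0 < ν) (j : ℕ) :
    ((j:ℝ) + 1) * (ν + j + 1) * acf ν (j+1) = (ν + 2 * j) * (ν + 2 * j + 1) * acf ν j := by
  unfold acf
  have h1 : 0 < Real.Gamma (ν + 2 * (j:ℝ)) := Real.Gamma_pos_of_pos (by positivity)
  have h2 : 0 < Real.Gamma (ν + (j:ℝ) + 1) := Real.Gamma_pos_of_pos (by positivity)
  have e1 : ν + 2 * ((j+1 : ℕ):ℝ) = (ν + 2 * j + 1) + 1 := by push_cast; ring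
  have e2 : ν + ((j+1 : ℕ):ℝ) + 1 = (ν + j + 1) + 1 := by push_cast; ring
  have p1 : 0 < ν + 2 * (j:ℝ) := by positivity
  have p2 : 0 < ν + (j:ℝ) + 1 := by positivity
  rw [e1, e2, Real.Gamma_add_one (by positivity), Real.Gamma_add_one (by positivity),
    Real.Gamma_add_one (s := ν + j + 1) (by positivity), Nat.factorial_succ]
  push_cast
  field_simp

lemma acf_summ {ν : ℝ} (hν : 0 < ν) {r : ℝ} (hr : 0 < r) (hr4 : r < 1/4) :
    Summable (fun j : ℕ => (ν + 2 * (j:ℝ))^2 * acf ν j * r ^ j) := by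
  have key : Tendsto (fun j : ℕ => ((ν + 2 + 2 * (j:ℝ)) / (ν + 2 * (j:ℝ))) *
      ((ν + 2 + 2 * (j:ℝ)) / (1 + 1 * (j:ℝ))) * ((ν + 1 + 2 * (j:ℝ)) / (ν + 1 + 1 * (j:ℝ))) * r)
      atTop (𝓝 (2/2 * (2/1) * (2/1) * r)) := by
    refine Tendsto.mul_const _ (Tendsto.mul (Tendsto.mul ?_ ?_) ?_)
    · exact tendsto_add_mul_div_add_mul_atTop_nhds _ _ _ two_ne_zero
    · exact tendsto_add_mul_div_add_mul_atTop_nhds _ _ _ one_ne_zero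
    · exact tendsto_add_mul_div_add_mul_atTop_nhds _ _ _ one_ne_zero
  refine summable_of_ratio_test_tendsto_lt_one (l := 2/2 * (2/1) * (2/1) * r) (by linarith) ?_ ?_
  · refine Eventually.of_forall fun j => ?_
    have := acf_pos hν j
    positivity
  · refine key.congr fun j => ?_
    have h0 := acf_pos hν j
    have h1 := acf_pos hν (j+1)
    have h2 := acf_succ hν j
    have p1 : 0 < ν + 2 * (j:ℝ) := by positivity
    have p2 : 0 < ν + (j:ℝ) + 1 := by positivity
    rw [Real.norm_of_nonneg (by positivity), Real.norm_of_nonneg (by positivity)]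
    have h3 : acf ν (j+1) = (ν + 2 * j) * (ν + 2 * j + 1) * acf ν j / (((j:ℝ) + 1) * (ν + j + 1)) := by
      rw [eq_div_iff (by positivity)]; linarith
    rw [h3]
    push_cast
    have p3 : 0 < ν + 1 + (j:ℝ) := by positivity
    rw [pow_succ]
    field_simp
    ring

lemma ps_deriv {c : ℕ → ℝ} {r : ℝ} (hr : 0 < r) (h0 : Summable fun j : ℕ => |c j| * r ^ j)
    (h : Summable fun j : ℕ => (j:ℝ) * |c j| * r ^ j) {z : ℝ} (hz : |z| < r) :
    HasDerivAt (fun z => ∑' j, c j * z ^ j) (∑' j, c j * (j * z ^ (j-1))) z := by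
  have hz' : z ∈ Metric.ball (0:ℝ) r := by simpa using hz
  refine hasDerivAt_tsum_of_isPreconnected (u := fun j : ℕ => (j:ℝ) * |c j| * r ^ j / r)
    (h.div_const r) Metric.isOpen_ball (convex_ball (0:ℝ) r).isPreconnected
    (fun j y _ => (hasDerivAt_pow j y).const_mul (c j)) ?_ hz' ?_ hz'
  · intro j y hy
    have hy : |y| < r := by simpa using hy
    rcases j with _ | j
    · simp
    · simp only [norm_mul, norm_pow, Real.norm_eq_abs, Nat.add_sub_cancel, Nat.abs_cast]
      have : |y| ^ j ≤ r ^ j := by gcongr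
      rw [pow_succ r, ← mul_assoc _ (r ^ j) r, mul_div_cancel_right₀ _ hr.ne']
      calc _ = ((j+1:ℕ):ℝ) * |c (j+1)| * |y| ^ j := by ring
        _ ≤ _ := by gcongr
  · refine Summable.of_norm_bounded h0 fun j => ?_
    simp only [norm_mul, norm_pow, Real.norm_eq_abs]
    gcongr

noncomputable def gg (ν : ℝ) (m : ℕ) (z : ℝ) : ℝ := ∑' j : ℕ, ((ν + 2 * (j:ℝ))^m * acf ν j) * z ^ j

lemma gg_summ {ν : ℝ} (hν : 0 < ν) {r : ℝ} (hr : 0 < r) (hr4 : r < 1/4) (m : ℕ) (hm : m ≤ 2) :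
    Summable (fun j : ℕ => ((ν + 2 * (j:ℝ))^m * acf ν j) * r ^ j) := by
  refine Summable.of_nonneg_of_le (fun j => ?_) (fun j => ?_) ((acf_summ hν hr hr4).mul_left (1/ν^(2-m)))
  · have := acf_pos hν j
    positivity
  · have := acf_pos hν j
    have h1 : ν ^ (2-m) ≤ (ν + 2 * (j:ℝ)) ^ (2-m) := by
      gcongr; linarith [(Nat.cast_nonneg j : (0:ℝ) ≤ j)]
    have h2 : (ν + 2 * (j:ℝ))^2 = (ν + 2 * (j:ℝ))^m * (ν + 2 * (j:ℝ))^(2-m) := by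
      rw [← pow_add]; congr 1; omega
    rw [h2, one_div, ← div_eq_inv_mul, le_div_iff₀ (by positivity)]
    calc _ = (ν + 2 * (j:ℝ))^m * ν ^ (2-m) * acf ν j * r ^ j := by ring
      _ ≤ _ := by gcongr

lemma gg_summ' {ν : ℝ} (hν : 0 < ν) {z : ℝ} (hz : |z| < 1/4) (m : ℕ) (hm : m ≤ 2) :
    Summable (fun j : ℕ => ((ν + 2 * (j:ℝ))^m * acf ν j) * z ^ j) := by
  obtain ⟨r, h1, h2⟩ := exists_between hz
  have hr : 0 < r := (abs_nonneg z).trans_lt h1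
  refine Summable.of_norm_bounded (gg_summ hν hr h2 m hm) fun j => ?_
  have := acf_pos hν j
  rw [norm_mul, norm_pow, Real.norm_eq_abs z, Real.norm_of_nonneg (by positivity)]
  gcongr

lemma gg_deriv {ν : ℝ} (hν : 0 < ν) {z : ℝ} (hz : |z| < 1/4) (m : ℕ) (hm : m ≤ 1) :
    ∃ d, HasDerivAt (gg ν m) d z ∧ 2 * z * d = gg ν (m+1) z - ν * gg ν m z := by
  obtain ⟨r, h1, h2⟩ := exists_between hz
  have hr : 0 < r := (abs_nonneg z).trans_lt h1
  have ha : ∀ j : ℕ, |(ν + 2 * (j:ℝ))^m * acf ν j| = (ν + 2 * (j:ℝ))^m * acf ν j := fun j => by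
    have := acf_pos hν j
    exact abs_of_nonneg (by positivity)
  refine ⟨_, ps_deriv (c := fun j => (ν + 2 * (j:ℝ))^m * acf ν j) hr ?_ ?_ h1, ?_⟩
  · simp only [ha]; exact gg_summ hν hr h2 m (by omega)
  · simp only [ha]
    refine Summable.of_nonneg_of_le (fun j => ?_) (fun j => ?_) (gg_summ hν hr h2 (m+1) (by omega))
    · have := acf_pos hν j
      positivity
    · have := acf_pos hν j
      have : (j:ℝ) ≤ ν + 2 * j := by linarith [(Nat.cast_nonneg j : (0:ℝ) ≤ j)]
      calc _ = (ν + 2 * (j:ℝ))^m * j * acf ν j * r ^ j := by ring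
        _ ≤ (ν + 2 * (j:ℝ))^m * (ν + 2 * j) * acf ν j * r ^ j := by gcongr
        _ = _ := by rw [pow_succ]
  · unfold gg
    rw [← tsum_mul_left, ← tsum_mul_left, ← Summable.tsum_sub (gg_summ' hν hz _ (by omega))
      ((gg_summ' hν hz _ (by omega)).mul_left _)]
    refine tsum_congr fun j => ?_
    rcases j with _ | j
    · simp; ring
    · rw [Nat.add_sub_cancel, pow_succ z, pow_succ (ν + _)]; push_cast; ring

lemma gg_ode {ν : ℝ} (hν : 0 < ν) {z : ℝ} (hz : |z| < 1/4) :
    gg ν 2 z - ν^2 * gg ν 0 z = 4 * z * (gg ν 2 z + gg ν 1 z) := by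
  have s0 := gg_summ' hν hz 0 (by omega)
  have s1 := gg_summ' hν hz 1 (by omega)
  have s2 := gg_summ' hν hz 2 (by omega)
  unfold gg
  rw [← tsum_mul_left, ← Summable.tsum_sub s2 (s0.mul_left _), ← Summable.tsum_add s2 s1,
    ← tsum_mul_left, Summable.tsum_eq_zero_add (s2.sub (s0.mul_left _))]
  simp only [Nat.cast_zero, mul_zero, add_zero, pow_zero, one_mul, mul_one, sub_self, zero_add]
  refine tsum_congr fun j => ?_
  have h := acf_succ hν j
  rw [pow_succ z]
  push_cast
  linear_combination 4 * z ^ j * z * h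

lemma const_aux {f : ℝ → ℝ} {b : ℝ} (hb : 0 < b) (hc : ContinuousOn f (Icc 0 b))
    (hd : ∀ x ∈ Ioo 0 b, HasDerivAt f 0 x) : f b = f 0 := by
  obtain ⟨c, _, h⟩ := exists_hasDerivAt_eq_slope f (fun _ => 0) hb hc hd
  have : b - 0 ≠ 0 := by linarith
  field_simp at h
  linarith

noncomputable def zz (p : ℝ) : ℝ := p^2 / (1 + p^2)^2

lemma zz_lt {p : ℝ} (h0 : 0 ≤ p) (h1 : p < 1) : |zz p| < 1/4 := by
  unfold zz
  rw [abs_of_nonneg (by positivity), div_lt_iff₀ (by positivity)]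
  have : 0 < (1 - p^2)^2 := by
    have : 0 < 1 - p^2 := by nlinarith
    positivity
  nlinarith

lemma zz_deriv (p : ℝ) : HasDerivAt zz (2 * p * (1 - p^2) / (1 + p^2)^3) p := by
  unfold zz
  have h := (hasDerivAt_pow 2 p).div (((hasDerivAt_pow 2 p).const_add 1).pow 2)
    (by positivity : (1 + p^2)^2 ≠ 0)
  refine HasDerivAt.congr_deriv h ?_
  have : 0 < 1 + p^2 := by positivity
  simp
  field_simp
  ring

lemma gg_cont {ν : ℝ} (hν : 0 < ν) {b : ℝ} (hb : b < 1) (m : ℕ) (hm : m ≤ 1) :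
    ContinuousOn (fun p => gg ν m (zz p)) (Icc 0 b) := by
  intro p hp
  obtain ⟨d, hd, _⟩ := gg_deriv hν (zz_lt hp.1 (hp.2.trans_lt hb)) m hm
  exact (ContinuousAt.comp (f := zz) hd.continuousAt (zz_deriv p).continuousAt).continuousWithinAt

lemma Q_zero {ν : ℝ} (hν : 0 < ν) {b : ℝ} (hb0 : 0 < b) (hb : b < 1) :
    (1 - b^2) / (1 + b^2) * gg ν 1 (zz b) - ν * gg ν 0 (zz b) = 0 := by
  have hE := const_aux (f := fun p => (p^2 / (1+p^2)) ^ ν *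
    ((1 - p^2) / (1 + p^2) * gg ν 1 (zz p) - ν * gg ν 0 (zz p))) hb0 ?_ ?_
  · have hp : 0 < (b^2 / (1+b^2)) ^ ν := by positivity
    simp only [ne_eq, OfNat.ofNat_ne_zero, not_false_eq_true, zero_pow, zero_div,
      Real.zero_rpow hν.ne', zero_mul] at hE
    rcases mul_eq_zero.1 hE with h | h
    · exact absurd h hp.ne'
    · exact h
  · refine ContinuousOn.mul (ContinuousOn.rpow_const ?_ fun _ _ => Or.inr hν.le)
      (ContinuousOn.sub (ContinuousOn.mul ?_ (gg_cont hν hb 1 le_rfl))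
        (continuousOn_const.mul (gg_cont hν hb 0 (by omega))))
    · exact ContinuousOn.div (by fun_prop) (by fun_prop) fun p _ => by positivity
    · exact ContinuousOn.div (by fun_prop) (by fun_prop) fun p _ => by positivity
  · intro p hp
    have hp0 := hp.1
    have hz := zz_lt hp.1.le (hp.2.trans hb)
    obtain ⟨d0, hd0, e0⟩ := gg_deriv hν hz 0 (by omega)
    obtain ⟨d1, hd1, e1⟩ := gg_deriv hν hz 1 (by omega)
    have e2 := gg_ode hν hz
    have hs : 0 < 1 + p^2 := by positivity
    have hy : HasDerivAt (fun p : ℝ => p^2 / (1+p^2)) (2 * p / (1 + p^2)^2) p := by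
      refine HasDerivAt.congr_deriv ((hasDerivAt_pow 2 p).div ((hasDerivAt_pow 2 p).const_add 1) hs.ne') ?_
      simp; ring
    have hτ : HasDerivAt (fun p : ℝ => (1 - p^2) / (1+p^2)) (-4 * p / (1 + p^2)^2) p := by
      refine HasDerivAt.congr_deriv (((hasDerivAt_pow 2 p).const_sub 1).div ((hasDerivAt_pow 2 p).const_add 1) hs.ne') ?_
      simp; ring
    have hy0 : 0 < p^2 / (1+p^2) := by positivity
    have H := (hy.rpow_const (p := ν) (Or.inl hy0.ne')).mul
      ((hτ.mul (hd1.comp p (zz_deriv p))).sub ((hd0.comp p (zz_deriv p)).const_mul ν))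
    refine HasDerivAt.congr_deriv H ?_
    simp only [Function.comp, Pi.mul_apply, Pi.sub_apply]
    symm
    norm_num at e0 e1
    generalize gg ν 0 (zz p) = g0 at *
    generalize gg ν 1 (zz p) = g1 at *
    generalize gg ν 2 (zz p) = g2 at *
    have hyp : (p^2 / (1+p^2)) ^ ν = (p^2 / (1+p^2)) ^ (ν - 1) * (p^2 / (1+p^2)) := by
      rw [← Real.rpow_add_one hy0.ne']; congr 1; ring
    rw [hyp]
    unfold zz at e0 e1 e2
    have E0 : 2 * p^2 * d0 = (1 + p^2)^2 * (g1 - ν * g0) := by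
      rw [← e0]; field_simp
    have E1 : 2 * p^2 * d1 = (1 + p^2)^2 * (g2 - ν * g1) := by
      rw [← e1]; field_simp
    have E2 : (1 - p^2)^2 * g2 = ν^2 * (1+p^2)^2 * g0 + 4 * p^2 * g1 := by
      field_simp at e2
      linear_combination e2
    generalize (p^2 / (1+p^2)) ^ (ν - 1) = Y
    linear_combination (norm := skip) -Y * (p * (1-p^2)^2/(1+p^2)^5 * E1
      - ν * p * (1-p^2)/(1+p^2)^4 * E0 + p / (1+p^2)^3 * E2)
    field_simp
    ring

lemma gg_val {ν : ℝ} (hν : 0 < ν) {b : ℝ} (hb0 : 0 < b) (hb : b < 1) :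
    gg ν 0 (zz b) = (1 + b^2) ^ ν / ν := by
  have hE := const_aux (f := fun p => (1+p^2) ^ (-ν) * gg ν 0 (zz p)) hb0 ?_ ?_
  · have hp : 0 < 1+b^2 := by positivity
    have h0 : gg ν 0 (zz 0) = 1 / ν := by
      unfold gg zz
      rw [tsum_eq_single 0]
      · simp [acf_zero hν]
      · intro j hj; simp [hj]
    simp only [h0] at hE
    rw [Real.rpow_neg hp.le] at hE
    have : 0 < (1+b^2)^ν := by positivity
    simp at hE
    field_simp at hE ⊢
    linarith
  · refine ContinuousOn.mul (ContinuousOn.rpow_const (by fun_prop) fun p _ => Or.inl (by positivity))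
      (gg_cont hν hb 0 (by omega))
  · intro p hp
    have hp0 := hp.1
    have hz := zz_lt hp.1.le (hp.2.trans hb)
    obtain ⟨d0, hd0, e0⟩ := gg_deriv hν hz 0 (by omega)
    have e2 := Q_zero hν hp.1 (hp.2.trans hb)
    have hs : 0 < 1 + p^2 := by positivity
    have H := (((hasDerivAt_pow 2 p).const_add 1).rpow_const (p := -ν) (Or.inl hs.ne')).mul
      (hd0.comp p (zz_deriv p))
    refine HasDerivAt.congr_deriv H ?_
    simp only [Function.comp, Pi.mul_apply, Pi.sub_apply]
    symm
    norm_num at e0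
    generalize gg ν 0 (zz p) = g0 at *
    generalize gg ν 1 (zz p) = g1 at *
    rw [Real.rpow_sub_one hs.ne']
    unfold zz at e0
    have E0 : 2 * p^2 * d0 = (1 + p^2)^2 * (g1 - ν * g0) := by
      rw [← e0]; field_simp
    generalize (1+p^2) ^ (- ν) = Y
    field_simp at e2
    simp
    linear_combination (norm := skip) -Y * ((1-p^2)/(p*(1+p^2)^3) * E0 + 1/(p * (1+p^2)) * e2)
    field_simp
    ring

lemma hasSum_acf {ν : ℝ} (hν : 0 < ν) {p : ℝ} (hp0 : 0 < p) (hp : p ≤ 1) :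
    HasSum (fun j => acf ν j * (zz p)^j) ((1 + p^2) ^ ν / ν) := by
  have hlt : ∀ p : ℝ, 0 < p → p < 1 → HasSum (fun j => acf ν j * (zz p)^j) ((1 + p^2) ^ ν / ν) := by
    intro p h0 h1
    rw [← gg_val hν h0 h1]
    have := (gg_summ' hν (zz_lt h0.le h1) 0 (by omega)).hasSum
    simpa [gg] using this
  rcases hp.lt_or_eq with h | rfl
  · exact hlt p hp0 h
  have hev : ∀ᶠ q : ℝ in 𝓝[<] 1, 0 < q ∧ q < 1 := by
    have : Ioo (0:ℝ) 1 ∈ 𝓝[<] (1:ℝ) := Ioo_mem_nhdsLT one_pos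
    exact this
  have hzc : ∀ j : ℕ, Tendsto (fun q => acf ν j * (zz q)^j) (𝓝[<] 1) (𝓝 (acf ν j * (zz 1)^j)) := by
    intro j
    exact (((zz_deriv 1).continuousAt.pow j).const_mul _ |>.tendsto).mono_left nhdsWithin_le_nhds
  have hrc : Tendsto (fun q : ℝ => (1 + q^2) ^ ν / ν) (𝓝[<] 1) (𝓝 ((1 + 1^2) ^ ν / ν)) := by
    have : ContinuousAt (fun q : ℝ => (1 + q^2) ^ ν / ν) 1 := by
      refine ContinuousAt.div_const (ContinuousAt.rpow_const (by fun_prop) (Or.inr hν.le)) _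
    exact this.tendsto.mono_left nhdsWithin_le_nhds
  have hnn : ∀ q (j : ℕ), 0 ≤ acf ν j * (zz q)^j := fun q j => by
    have := acf_pos hν j
    unfold zz
    positivity
  have hS : Summable (fun j => acf ν j * (zz 1)^j) := by
    refine summable_of_sum_le (c := (1 + 1^2) ^ ν / ν) (fun j => hnn 1 j) fun u => ?_
    refine le_of_tendsto_of_tendsto (tendsto_finsetSum u fun j _ => hzc j) hrc ?_
    filter_upwards [hev] with q hq
    exact sum_le_hasSum u (fun j _ => hnn q j) (hlt q hq.1 hq.2)
  have hT := tendsto_tsum_of_dominated_convergence (𝓕 := 𝓝[<] (1:ℝ)) hS hzc (by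
    filter_upwards [hev] with q hq j
    have h1 := acf_pos hν j
    have h2 := zz_lt hq.1.le hq.2
    have h3 : zz 1 = 1/4 := by norm_num [zz]
    rw [norm_mul, norm_pow, Real.norm_eq_abs, Real.norm_eq_abs, abs_of_pos h1, h3]
    gcongr)
  have hT2 := hrc.congr' (f₂ := fun q => ∑' j, acf ν j * (zz q)^j) (by
    filter_upwards [hev] with q hq
    exact (hlt q hq.1 hq.2).tsum_eq.symm)
  rw [tendsto_nhds_unique hT2 hT]
  exact hS.hasSum

lemma lap_one {s a : ℝ} (hs : 0 < s) (ha : 0 < a) :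
    IntegrableOn (fun y : ℝ => y ^ (s - 1) * Real.exp (-(a * y))) (Ioi 0) := by
  by_contra h
  have h1 := integral_undef h
  rw [Real.integral_rpow_mul_exp_neg_mul_Ioi hs ha] at h1
  have := Real.Gamma_pos_of_pos hs
  have : 0 < (1 / a) ^ s * Real.Gamma s := by positivity
  linarith

noncomputable def FF (ν a : ℝ) (j : ℕ) (y : ℝ) : ℝ :=
  ((1/2) ^ (ν + 2 * (j:ℝ)) / ((Nat.factorial j : ℝ) * Real.Gamma (ν + (j:ℝ) + 1))) *
    (y ^ (ν + 2 * (j:ℝ) - 1) * Real.exp (-(a * y)))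

lemma bes_int {ν p a : ℝ} (hν : 0 < ν) (hp0 : 0 < p) (hp : p ≤ 1) (ha : a = (1 + p^2) / (2 * p)) :
    HasSum (fun j => ∫ y in Ioi 0, FF ν a j y) (∫ y in Ioi 0, ∑' j, FF ν a j y) ∧
    ∫ y in Ioi 0, ∑' j, FF ν a j y = p ^ ν / ν := by
  have ha0 : 0 < a := by rw [ha]; positivity
  have hI : ∀ j, ∫ y in Ioi 0, FF ν a j y = (p / (1+p^2)) ^ ν * (acf ν j * (zz p)^j) := by
    intro j
    unfold FF
    rw [integral_const_mul, Real.integral_rpow_mul_exp_neg_mul_Ioi (by positivity) ha0]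
    have h2 : (1/2 : ℝ) ^ (ν + 2 * (j:ℝ)) * (1 / a) ^ (ν + 2 * (j:ℝ)) =
        (p / (1+p^2)) ^ ν * (zz p)^j := by
      rw [← Real.mul_rpow (by positivity) (by positivity)]
      have : 1 / 2 * (1 / a) = p / (1+p^2) := by rw [ha]; field_simp
      rw [this, Real.rpow_add (by positivity), Real.rpow_mul (by positivity)]
      congr 1
      rw [Real.rpow_natCast]
      congr 1
      rw [Real.rpow_two, div_pow, zz]
    unfold acf
    calc _ = ((1/2 : ℝ) ^ (ν + 2 * (j:ℝ)) * (1 / a) ^ (ν + 2 * (j:ℝ))) *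
        (Real.Gamma (ν + 2 * (j:ℝ)) / ((Nat.factorial j : ℝ) * Real.Gamma (ν + (j:ℝ) + 1))) := by ring
      _ = _ := by rw [h2]; ring
  have hS := (hasSum_acf hν hp0 hp).mul_left ((p / (1+p^2)) ^ ν)
  have hH := hasSum_integral_of_summable_integral_norm (μ := volume.restrict (Ioi 0)) (F := FF ν a)
    (fun j => (lap_one (s := ν + 2 * (j:ℝ)) (by positivity) ha0).const_mul _) (by
      refine hS.summable.congr fun j => ?_
      rw [← hI j]
      refine setIntegral_congr_fun measurableSet_Ioi fun y (hy : 0 < y) => ?_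
      have h2 : 0 < Real.Gamma (ν + (j:ℝ) + 1) := Real.Gamma_pos_of_pos (by positivity)
      refine (Real.norm_of_nonneg ?_).symm
      unfold FF
      positivity)
  refine ⟨hH, ?_⟩
  rw [← hH.tsum_eq]
  simp only [hI]
  rw [hS.tsum_eq, Real.div_rpow hp0.le (by positivity)]
  have : 0 < (1+p^2)^ν := by positivity
  field_simp

theorem stmt_9 (ν k : ℝ) (hν : 0 < ν) (hk : 0 < k) :
    Filter.Tendsto (fun t : ℝ => rBes ν k t) (nhdsWithin 0 (Set.Ioi 0))
      (nhds (max (1 - k ^ (-(2 * ν))) 0)) := by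
  obtain ⟨p, hp0, hp1, hpa, hpv⟩ : ∃ p : ℝ, 0 < p ∧ p ≤ 1 ∧ (k + 1/k) / 2 = (1 + p^2) / (2 * p) ∧
      1 - k ^ (-ν) * p ^ ν = max (1 - k ^ (-(2 * ν))) 0 := by
    have h2 : k ^ (-(2*ν)) = k ^ (-ν) * k ^ (-ν) := by
      rw [← Real.rpow_add hk]; congr 1; ring
    rcases le_total k 1 with h | h
    · refine ⟨k, hk, h, by field_simp; ring, ?_⟩
      rw [max_eq_right, ← Real.rpow_add hk]
      · simp
      · have := Real.one_le_rpow_of_pos_of_le_one_of_nonpos hk h (by linarith : -(2*ν) ≤ 0)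
        linarith
    · refine ⟨k⁻¹, by positivity, inv_le_one_of_one_le₀ h, by field_simp, ?_⟩
      rw [max_eq_left, h2, Real.inv_rpow hk.le, Real.rpow_neg hk.le]
      have := Real.rpow_le_one_of_one_le_of_nonpos h (by linarith : -(2*ν) ≤ 0)
      linarith
  set a := (k + 1/k) / 2 with ha
  obtain ⟨-, hB⟩ := bes_int hν hp0 hp1 hpa
  have hG := Real.Gamma_pos_of_pos hν
  have hBi : IntegrableOn (fun y => ∑' j, FF ν a j y) (Ioi 0) := by
    by_contra h
    rw [integral_undef h] at hB
    have : 0 < p ^ ν / ν := by positivity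
    linarith
  have hr0 : 0 < 1 / (2 * k) := by positivity
  have hAi := (lap_one hν hr0).const_mul (1 / ((2:ℝ) ^ ν * Real.Gamma (1 + ν)))
  have hA : ∫ y in Ioi (0:ℝ), 1 / ((2:ℝ) ^ ν * Real.Gamma (1 + ν)) *
      (y ^ (ν - 1) * Real.exp (-(1 / (2 * k) * y))) = k ^ ν / ν := by
    rw [integral_const_mul, Real.integral_rpow_mul_exp_neg_mul_Ioi hν hr0, add_comm 1 ν,
      Real.Gamma_add_one hν.ne', one_div_one_div, Real.mul_rpow (by norm_num) hk.le]
    have : 0 < (2:ℝ) ^ ν := by positivity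
    field_simp
  have hfun : EqOn (fun y => 1 / ((2:ℝ) ^ ν * Real.Gamma (1 + ν)) *
      (y ^ (ν - 1) * Real.exp (-(1 / (2 * k) * y))) - ∑' j, FF ν a j y) (fun y : ℝ =>
      y⁻¹ * Real.exp (-y / (2 * k)) *
        (y ^ ν / ((2:ℝ) ^ ν * Real.Gamma (1 + ν)) - Real.exp (-(k * y) / 2) * besselI ν y))
      (Ioi 0) := by
    intro y hy
    have hy : 0 < y := hy
    have e1 : Real.exp (-(1 / (2 * k) * y)) = Real.exp (-y / (2 * k)) := by
      congr 1; ring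
    have e2 : Real.exp (-(a * y)) = Real.exp (-y / (2 * k)) * Real.exp (-(k * y) / 2) := by
      rw [← Real.exp_add]; congr 1; rw [ha]; field_simp; ring
    have e3 : ∑' j, FF ν a j y = y⁻¹ * Real.exp (-y / (2 * k)) * Real.exp (-(k * y) / 2) * besselI ν y := by
      unfold besselI
      rw [← tsum_mul_left]
      refine tsum_congr fun j => ?_
      unfold FF
      rw [e2, Real.rpow_sub_one hy.ne', div_eq_mul_one_div y 2, Real.mul_rpow hy.le (by norm_num)]
      ring
    simp only [e3, e1]
    rw [Real.rpow_sub_one hy.ne']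
    ring
  have hint := (hAi.sub hBi)
  have hint2 := IntegrableOn.congr_fun hint hfun measurableSet_Ioi
  have hval := setIntegral_congr_fun (μ := volume) measurableSet_Ioi hfun
  rw [integral_sub hAi hBi, hA, hB] at hval
  have hb : Tendsto (fun t : ℝ => k / t) (𝓝[>] 0) atTop := by
    simp only [div_eq_mul_inv]
    exact tendsto_inv_nhdsGT_zero.const_mul_atTop hk
  have hT := (intervalIntegral_tendsto_integral_Ioi (0:ℝ) hint2 hb).const_mul (ν * k ^ (-ν))
  rw [← hval] at hT
  unfold rBes
  convert hT using 2
  rw [← hpv, Real.rpow_neg hk.le]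
  have : 0 < k ^ ν := by positivity
  field_simp
end

section
/- Let ν > 0 and k = 1, and let r_{ν,1} be as defined, i.e. r_{ν,1}(t) = ν·∫_0^{1/t} y^{−1}·e^{−y/2}·[ y^ν/(2^ν Γ(1+ν)) − e^{−y/2}·I_ν(y) ] dy. Then lim_{t→0⁺} r_{ν,1}(t)/√t = 2ν/√(2π), i.e. r_{ν,1}(t) ∼ √t·(2ν)/√(2π) as t → 0⁺. -/
open MeasureTheory Real Filter Set Topology

lemma beta_aux {u v : ℝ} (hu : 0 < u) (hv : 0 < v) :
    IntervalIntegrable (fun x : ℝ => x ^ (u - 1) * (1 - x) ^ (v - 1)) volume 0 1 ∧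
    ∫ x in (0:ℝ)..1, x ^ (u - 1) * (1 - x) ^ (v - 1)
      = Real.Gamma u * Real.Gamma v / Real.Gamma (u + v) := by
  have hc := Complex.betaIntegral_convergent (u := (u:ℂ)) (v := (v:ℂ)) (by simpa) (by simpa)
  have key : ∀ x ∈ Set.Ioc (0:ℝ) 1, ((x:ℂ) ^ ((u:ℂ) - 1) * (1 - (x:ℂ)) ^ ((v:ℂ) - 1))
      = ((x ^ (u - 1) * (1 - x) ^ (v - 1) : ℝ) : ℂ) := by
    intro x hx
    have h1 : (0:ℝ) ≤ 1 - x := by linarith [hx.2]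
    rw [Complex.ofReal_mul, Complex.ofReal_cpow hx.1.le, Complex.ofReal_cpow h1]
    push_cast
    rfl
  constructor
  · rw [intervalIntegrable_iff_integrableOn_Ioc_of_le zero_le_one] at hc ⊢
    have h2 := hc.re
    refine (MeasureTheory.integrableOn_congr_fun ?_ measurableSet_Ioc).1 h2
    intro x hx
    simp only [key x hx]
    simp
  · have hb := Complex.betaIntegral_eq_Gamma_mul_div (u:ℂ) (v:ℂ) (by simpa) (by simpa)
    have : Complex.betaIntegral u v
        = ((∫ x in (0:ℝ)..1, x ^ (u - 1) * (1 - x) ^ (v - 1) : ℝ) : ℂ) := by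
      rw [Complex.betaIntegral, ← intervalIntegral.integral_ofReal]
      apply intervalIntegral.integral_congr_ae
      refine Filter.Eventually.of_forall fun x hx => ?_
      rw [uIoc_of_le zero_le_one] at hx
      exact key x hx
    rw [this, ← Complex.ofReal_add, Complex.Gamma_ofReal, Complex.Gamma_ofReal,
      Complex.Gamma_ofReal] at hb
    exact_mod_cast hb

lemma w_int {a : ℝ} (ha : -1 < a) :
    IntervalIntegrable (fun x : ℝ => x ^ a * (1 - x) ^ a) volume 0 1 := by
  have := (beta_aux (u := a + 1) (v := a + 1) (by linarith) (by linarith)).1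
  simpa using this

lemma w_mul_int {a : ℝ} (ha : -1 < a) {f : ℝ → ℝ} (hf : Continuous f) :
    IntervalIntegrable (fun x : ℝ => x ^ a * (1 - x) ^ a * f x) volume 0 1 :=
  (w_int ha).mul_continuousOn hf.continuousOn

lemma moment_rec {a : ℝ} (ha : -1 < a) (j : ℕ) :
    (a + 1 + j + 1 / 2) * ∫ x in (0:ℝ)..1, x ^ a * (1 - x) ^ a * (1 - 2 * x) ^ (2 * (j + 1))
      = (j + 1 / 2) * ∫ x in (0:ℝ)..1, x ^ a * (1 - x) ^ a * (1 - 2 * x) ^ (2 * j) := by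
  have h0 : (0:ℝ) < a + 1 := by linarith
  have i1 := w_mul_int ha (f := fun x => (1 - 2 * x) ^ (2 * (j + 1))) (by fun_prop)
  have i2 := w_mul_int ha (f := fun x => (1 - 2 * x) ^ (2 * j)) (by fun_prop)
  have key := intervalIntegral.integral_eq_sub_of_hasDerivAt_of_le (a := 0) (b := 1)
    (f := fun x : ℝ => x ^ (a + 1) * (1 - x) ^ (a + 1) * (1 - 2 * x) ^ (2 * j + 1))
    (f' := fun x : ℝ => (a + 1 + j + 1 / 2) * (x ^ a * (1 - x) ^ a * (1 - 2 * x) ^ (2 * (j + 1)))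
      - (j + 1 / 2) * (x ^ a * (1 - x) ^ a * (1 - 2 * x) ^ (2 * j))) zero_le_one ?_ ?_ ?_
  · rw [intervalIntegral.integral_sub (i1.const_mul _) (i2.const_mul _),
      intervalIntegral.integral_const_mul, intervalIntegral.integral_const_mul] at key
    simp [Real.zero_rpow h0.ne'] at key
    simp only [one_div]
    linarith
  · refine ContinuousOn.mul (ContinuousOn.mul ?_ ?_) (by fun_prop)
    · exact (Real.continuous_rpow_const h0.le).continuousOn
    · exact ((Real.continuous_rpow_const h0.le).comp (by fun_prop : Continuous fun x : ℝ => 1 - x)).continuousOn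
  · intro x hx
    have hx1 : 0 < 1 - x := by linarith [hx.2]
    have d1 := Real.hasDerivAt_rpow_const (x := x) (p := a + 1) (Or.inl hx.1.ne')
    have d0 : HasDerivAt (fun x : ℝ => 1 - x) (-1) x := by
      simpa using (hasDerivAt_id x).const_sub 1
    have d2 := d0.rpow_const (p := a + 1) (Or.inl hx1.ne')
    have d3 : HasDerivAt (fun x : ℝ => 1 - 2 * x) (-2) x := by
      simpa using ((hasDerivAt_id x).const_mul 2).const_sub 1
    have d4 := d3.pow (2 * j + 1)
    refine ((d1.mul d2).mul d4).congr_deriv ?_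
    simp only [add_sub_cancel_right, Pi.mul_apply, Pi.pow_apply]
    rw [Real.rpow_add_one hx.1.ne', Real.rpow_add_one hx1.ne']
    push_cast
    ring
  · exact (i1.const_mul _).sub (i2.const_mul _)

lemma moment_eq {ν : ℝ} (hν : 0 < ν) (j : ℕ) :
    ∫ x in (0:ℝ)..1, x ^ (ν - 1 / 2) * (1 - x) ^ (ν - 1 / 2) * (1 - 2 * x) ^ (2 * j)
      = (2:ℝ) ^ (-(2 * ν)) * √π * Real.Gamma (ν + 1 / 2) *
        ((2 * j).factorial / (4 ^ j * j.factorial * Real.Gamma (ν + j + 1))) := by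
  induction j with
  | zero =>
    have h := (beta_aux (u := ν + 1 / 2) (v := ν + 1 / 2) (by linarith) (by linarith)).2
    have e : ν + 1 / 2 - 1 = ν - 1 / 2 := by ring
    rw [e] at h
    simp only [mul_zero, pow_zero, mul_one, h]
    have d := Real.Gamma_mul_Gamma_add_half (ν + 1 / 2)
    have e2 : ν + 1 / 2 + 1 / 2 = ν + 1 := by ring
    have e3 : 2 * (ν + 1 / 2) = 2 * ν + 1 := by ring
    have e4 : 1 - (2 * ν + 1) = -(2 * ν) := by ring
    have e5 : ν + 1 / 2 + (ν + 1 / 2) = 2 * ν + 1 := by ring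
    rw [e2, e3, e4] at d
    rw [e5]
    have g1 : 0 < Real.Gamma (2 * ν + 1) := Real.Gamma_pos_of_pos (by linarith)
    have g2 : 0 < Real.Gamma (ν + 1) := Real.Gamma_pos_of_pos (by linarith)
    simp only [Nat.factorial_zero, Nat.cast_one, Nat.cast_zero, add_zero, mul_one, one_mul]
    rw [div_eq_iff g1.ne']
    rw [mul_one_div, div_mul_eq_mul_div, eq_div_iff g2.ne']
    linear_combination Real.Gamma (ν + 1 / 2) * d
  | succ j ih =>
    have hr := moment_rec (a := ν - 1 / 2) (by linarith) j
    rw [ih] at hr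
    have hp : 0 < ν + j + 1 := by positivity
    have gp : 0 < Real.Gamma (ν + j + 1) := Real.Gamma_pos_of_pos hp
    have e : ν - 1 / 2 + 1 + j + 1 / 2 = ν + j + 1 := by ring
    rw [e, mul_comm, ← eq_div_iff hp.ne'] at hr
    rw [hr]
    have e2 : ν + ((j + 1 : ℕ) : ℝ) + 1 = (ν + j + 1) + 1 := by push_cast; ring
    rw [e2, Real.Gamma_add_one hp.ne']
    have e3 : 2 * (j + 1) = (2 * j + 1) + 1 := by ring
    rw [e3, Nat.factorial_succ (2 * j + 1), Nat.factorial_succ (2 * j), Nat.factorial_succ j, pow_succ]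
    push_cast
    have hj : (0:ℝ) < j.factorial := by positivity
    field_simp
    ring

/-- Poisson representation -/
lemma bessel_rep {ν : ℝ} (hν : 0 < ν) {y : ℝ} (hy : 0 < y) :
    Real.exp (-y) * besselI ν y = (2:ℝ) ^ ν / (√π * Real.Gamma (ν + 1 / 2)) * (y ^ ν *
      ∫ x in (0:ℝ)..1, x ^ (ν - 1 / 2) * (1 - x) ^ (ν - 1 / 2) * Real.exp (-(2 * y * x))) := by
  have ha : -1 < ν - 1 / 2 := by linarith
  set w : ℝ → ℝ := fun x => x ^ (ν - 1 / 2) * (1 - x) ^ (ν - 1 / 2) with hw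
  have hwi : IntervalIntegrable w volume 0 1 := w_int ha
  -- step 1: sum
  have s1 : HasSum (fun j : ℕ => ∫ x in (0:ℝ)..1, w x * ((y * (1 - 2 * x)) ^ (2 * j) / (2 * j).factorial))
      (∫ x in (0:ℝ)..1, w x * Real.cosh (y * (1 - 2 * x))) := by
    apply intervalIntegral.hasSum_integral_of_dominated_convergence
      (fun j x => |w x| * (y ^ (2 * j) / (2 * j).factorial))
    · intro j
      have := (hwi.mul_continuousOn (g := fun x => ((y * (1 - 2 * x)) ^ (2 * j) / (2 * j).factorial))
        (by fun_prop))
      exact (intervalIntegrable_iff.1 this).aestronglyMeasurable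
    · intro j
      refine Filter.Eventually.of_forall fun x hx => ?_
      rw [uIoc_of_le zero_le_one] at hx
      rw [norm_mul, Real.norm_eq_abs, Real.norm_eq_abs, abs_div, abs_pow, abs_mul y, abs_of_pos hy,
        Nat.abs_cast]
      have : |1 - 2 * x| ≤ 1 := by rw [abs_le]; constructor <;> linarith [hx.1, hx.2]
      gcongr
      nlinarith
    · refine Filter.Eventually.of_forall fun x hx => ?_
      exact (Real.hasSum_cosh y).summable.mul_left _
    · simp_rw [tsum_mul_left]
      exact hwi.abs.mul_const _
    · refine Filter.Eventually.of_forall fun x hx => ?_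
      exact (Real.hasSum_cosh _).mul_left _
  -- step 2: symmetry
  have ci : ∀ c : ℝ, IntervalIntegrable (fun x => w x * Real.exp (c * (1 - 2 * x))) volume 0 1 :=
    fun c => hwi.mul_continuousOn (by fun_prop)
  have s2 : ∫ x in (0:ℝ)..1, w x * Real.cosh (y * (1 - 2 * x))
      = ∫ x in (0:ℝ)..1, w x * Real.exp (y * (1 - 2 * x)) := by
    have h := intervalIntegral.integral_comp_sub_left (a := 0) (b := 1)
      (fun x => w x * Real.exp (y * (1 - 2 * x))) 1
    have h2 : ∫ x in (0:ℝ)..1, w (1 - x) * Real.exp (y * (1 - 2 * (1 - x)))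
        = ∫ x in (0:ℝ)..1, w x * Real.exp ((-y) * (1 - 2 * x)) := by
      congr 1; ext x
      simp only [hw, sub_sub_cancel]
      rw [mul_comm ((1 - x) ^ _)]
      congr 2; ring
    rw [h2] at h
    simp only [sub_self, sub_zero] at h
    have h3 : ∀ x, w x * Real.cosh (y * (1 - 2 * x)) = (1 / 2) * (w x * Real.exp (y * (1 - 2 * x)))
        + (1 / 2) * (w x * Real.exp ((-y) * (1 - 2 * x))) := by
      intro x; rw [Real.cosh_eq, neg_mul]; ring
    simp_rw [h3]
    rw [intervalIntegral.integral_add ((ci _).const_mul _) ((ci _).const_mul _),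
      intervalIntegral.integral_const_mul, intervalIntegral.integral_const_mul, h]
    ring
  have s3 : ∫ x in (0:ℝ)..1, w x * Real.exp (y * (1 - 2 * x))
      = Real.exp y * ∫ x in (0:ℝ)..1, w x * Real.exp (-(2 * y * x)) := by
    rw [← intervalIntegral.integral_const_mul]
    congr 1; ext x
    rw [show y * (1 - 2 * x) = y + -(2 * y * x) by ring, Real.exp_add]; ring
  have g1 : 0 < Real.Gamma (ν + 1 / 2) := Real.Gamma_pos_of_pos (by linarith)
  have hpi : 0 < √π := Real.sqrt_pos.2 Real.pi_pos
  have s4 : besselI ν y = (2:ℝ) ^ ν / (√π * Real.Gamma (ν + 1 / 2)) * y ^ ν *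
      ∫ x in (0:ℝ)..1, w x * Real.cosh (y * (1 - 2 * x)) := by
    rw [besselI]
    refine HasSum.tsum_eq ?_
    have s5 := s1.mul_left ((2:ℝ) ^ ν / (√π * Real.Gamma (ν + 1 / 2)) * y ^ ν)
    refine (congrArg (fun F : ℕ → ℝ => HasSum F _) (funext fun j : ℕ => ?_)).mpr s5
    have : ∫ x in (0:ℝ)..1, w x * ((y * (1 - 2 * x)) ^ (2 * j) / (2 * j).factorial)
        = (y ^ (2 * j) / (2 * j).factorial) * ∫ x in (0:ℝ)..1, w x * (1 - 2 * x) ^ (2 * j) := by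
      rw [← intervalIntegral.integral_const_mul]
      congr 1; ext x
      rw [mul_pow]; ring
    rw [this, moment_eq hν]
    have gj : 0 < Real.Gamma (ν + j + 1) := Real.Gamma_pos_of_pos (by positivity)
    have e : (y / 2) ^ (ν + 2 * (j:ℝ)) = y ^ ν / 2 ^ ν * (y ^ (2 * j) / 4 ^ j) := by
      rw [Real.rpow_add (by positivity), Real.div_rpow hy.le (by norm_num)]
      congr 1
      rw [show (2 * (j:ℝ)) = ((2 * j : ℕ) : ℝ) by push_cast; ring, Real.rpow_natCast, div_pow,
        pow_mul 2]
      norm_num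
    have e2 : (2:ℝ) ^ (-(2 * ν)) = ((2:ℝ) ^ ν)⁻¹ * ((2:ℝ) ^ ν)⁻¹ := by
      rw [← Real.rpow_neg (by norm_num), ← Real.rpow_add (by norm_num)]; congr 1; ring
    rw [e, e2]
    have h2 : (0:ℝ) < 2 ^ ν := by positivity
    field_simp
  rw [s4, s2, s3]
  have : Real.exp (-y) * Real.exp y = 1 := by rw [← Real.exp_add]; simp
  linear_combination ((2:ℝ) ^ ν / (√π * Real.Gamma (ν + 1 / 2)) * y ^ ν * ∫ x in (0:ℝ)..1, w x * Real.exp (-(2 * y * x))) * this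

lemma h_int {ν : ℝ} (hν : 0 < ν) :
    IntegrableOn (fun y : ℝ => y ^ (ν - 1) *
      ∫ x in (0:ℝ)..1, x ^ (ν - 1 / 2) * (1 - x) ^ (ν - 1 / 2) * Real.exp (-(2 * y * x))) (Ioi 0) ∧
    ∫ y in Ioi (0:ℝ), y ^ (ν - 1) *
      ∫ x in (0:ℝ)..1, x ^ (ν - 1 / 2) * (1 - x) ^ (ν - 1 / 2) * Real.exp (-(2 * y * x))
      = (1 / 2) ^ ν * Real.Gamma ν * (√π * Real.Gamma (ν + 1 / 2) / Real.Gamma (ν + 1)) := by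
  set f : ℝ → ℝ → ℝ := fun x y => x ^ (ν - 1 / 2) * (1 - x) ^ (ν - 1 / 2) *
    (y ^ (ν - 1) * Real.exp (-(2 * x * y))) with hf
  have hfm : Measurable (Function.uncurry f) := by
    simp only [hf, Function.uncurry_def]
    fun_prop
  have hx1 : ∀ x ∈ Ioc (0:ℝ) 1, IntegrableOn (f x) (Ioi 0) := by
    intro x hx
    have h := integrableOn_rpow_mul_exp_neg_mul_rpow (p := 1) (s := ν - 1) (b := 2 * x)
      (by linarith) one_pos (by linarith [hx.1])
    simp only [Real.rpow_one, neg_mul] at h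
    simpa [hf, IntegrableOn] using h.const_mul (x ^ (ν - 1 / 2) * (1 - x) ^ (ν - 1 / 2))
  have hx2 : ∀ x ∈ Ioc (0:ℝ) 1, ∫ y in Ioi (0:ℝ), f x y
      = (1 / 2) ^ ν * Real.Gamma ν * (x ^ ((1 / 2 : ℝ) - 1) * (1 - x) ^ (ν + 1 / 2 - 1)) := by
    intro x hx
    simp only [hf]
    rw [integral_const_mul, Real.integral_rpow_mul_exp_neg_mul_Ioi hν (by linarith [hx.1]),
      show ν + 1 / 2 - 1 = ν - 1 / 2 by ring,
      show (1 / (2 * x)) = (1 / 2) * x⁻¹ by field_simp,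
      Real.mul_rpow (by norm_num) (inv_nonneg.2 hx.1.le), Real.inv_rpow hx.1.le,
      ← Real.rpow_neg hx.1.le, show ((1:ℝ) / 2 - 1) = (ν - 1 / 2) + (-ν) by ring,
      Real.rpow_add hx.1]
    ring
  have hx3 : ∀ x ∈ Ioc (0:ℝ) 1, ∫ y in Ioi (0:ℝ), ‖f x y‖ = ∫ y in Ioi (0:ℝ), f x y := by
    intro x hx
    refine setIntegral_congr_fun measurableSet_Ioi fun y hy => ?_
    have hy' : (0:ℝ) < y := hy
    have h1 : 0 ≤ 1 - x := by linarith [hx.2]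
    have h0 : 0 ≤ x := hx.1.le
    simp only [hf]
    rw [Real.norm_of_nonneg]
    positivity
  obtain ⟨b1, b2⟩ := beta_aux (u := 1 / 2) (v := ν + 1 / 2) (by norm_num) (by linarith)
  rw [intervalIntegrable_iff_integrableOn_Ioc_of_le zero_le_one] at b1
  have hI : Integrable (Function.uncurry f)
      ((volume.restrict (Ioc (0:ℝ) 1)).prod (volume.restrict (Ioi (0:ℝ)))) := by
    rw [integrable_prod_iff hfm.aestronglyMeasurable]
    constructor
    · refine (ae_restrict_iff' measurableSet_Ioc).2 (Filter.Eventually.of_forall fun x hx => ?_)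
      exact hx1 x hx
    · refine (b1.const_mul ((1 / 2) ^ ν * Real.Gamma ν)).congr ?_
      refine (ae_restrict_iff' measurableSet_Ioc).2 (Filter.Eventually.of_forall fun x hx => ?_)
      exact ((hx3 x hx).trans (hx2 x hx)).symm
  have e : ∀ y, y ^ (ν - 1) *
      ∫ x in (0:ℝ)..1, x ^ (ν - 1 / 2) * (1 - x) ^ (ν - 1 / 2) * Real.exp (-(2 * y * x))
      = ∫ x in Ioc (0:ℝ) 1, f x y := by
    intro y
    rw [intervalIntegral.integral_of_le zero_le_one, ← integral_const_mul]
    congr 1; ext x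
    simp only [hf]
    rw [show 2 * y * x = 2 * x * y by ring]
    ring
  simp_rw [e]
  constructor
  · exact hI.integral_prod_right
  · rw [← integral_integral_swap hI, setIntegral_congr_fun measurableSet_Ioc hx2,
      integral_const_mul, ← intervalIntegral.integral_of_le zero_le_one, b2, Real.Gamma_one_half_eq,
      show (1:ℝ) / 2 + (ν + 1 / 2) = ν + 1 by ring]

lemma lap_cont {ν : ℝ} (hν : 0 < ν) : ContinuousOn (fun y : ℝ =>
    ∫ x in (0:ℝ)..1, x ^ (ν - 1 / 2) * (1 - x) ^ (ν - 1 / 2) * Real.exp (-(2 * y * x))) (Ioi 0) := by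
  simp_rw [intervalIntegral.integral_of_le zero_le_one]
  have hw := w_int (a := ν - 1 / 2) (by linarith)
  rw [intervalIntegrable_iff_integrableOn_Ioc_of_le zero_le_one] at hw
  refine continuousOn_of_dominated (bound := fun x => x ^ (ν - 1 / 2) * (1 - x) ^ (ν - 1 / 2))
    ?_ ?_ hw ?_
  · intro y _
    exact Measurable.aestronglyMeasurable (by fun_prop)
  · intro y hy
    refine (ae_restrict_iff' measurableSet_Ioc).2 (Filter.Eventually.of_forall fun x hx => ?_)
    have hy' : (0:ℝ) < y := hy
    have h1 : 0 ≤ 1 - x := by linarith [hx.2]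
    have h0 : 0 ≤ x := hx.1.le
    rw [Real.norm_of_nonneg (by positivity)]
    refine mul_le_of_le_one_right (by positivity) ?_
    rw [Real.exp_le_one_iff]
    have : 0 ≤ 2 * y * x := by positivity
    linarith
  · refine Filter.Eventually.of_forall fun x => ?_
    fun_prop

lemma rpow_le_two {a u : ℝ} (ha : -1 < a) (h1 : 1 / 2 ≤ u) (h2 : u ≤ 1) : u ^ a ≤ 2 := by
  have h0 : 0 < u := by linarith
  calc u ^ a ≤ u ^ (-1:ℝ) := Real.rpow_le_rpow_of_exponent_ge h0 h2 ha.le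
    _ = u⁻¹ := Real.rpow_neg_one u
    _ ≤ 2 := by rw [inv_le_comm₀ h0 two_pos]; linarith

lemma lap_lim {ν : ℝ} (hν : 0 < ν) : Tendsto (fun y : ℝ => y ^ (ν + 1 / 2) *
    ∫ x in (0:ℝ)..1, x ^ (ν - 1 / 2) * (1 - x) ^ (ν - 1 / 2) * Real.exp (-(2 * y * x))) atTop
    (𝓝 ((1 / 2) ^ (ν + 1 / 2) * Real.Gamma (ν + 1 / 2))) := by
  set a : ℝ := ν - 1 / 2 with ha'
  have ha : -1 < a := by linarith
  have ea : ν + 1 / 2 = a + 1 := by rw [ha']; ring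
  rw [ea]
  have hw := w_int ha
  have hwe : ∀ y : ℝ, IntervalIntegrable (fun x => x ^ a * (1 - x) ^ a * Real.exp (-(2 * y * x))) volume 0 1 :=
    fun y => w_mul_int ha (by fun_prop)
  have sub1 : uIcc (0:ℝ) (1 / 2) ⊆ uIcc 0 1 := by
    rw [Set.uIcc_of_le (by norm_num), Set.uIcc_of_le (by norm_num)]
    exact Icc_subset_Icc le_rfl (by norm_num)
  have sub2 : uIcc (1 / 2:ℝ) 1 ⊆ uIcc 0 1 := by
    rw [Set.uIcc_of_le (by norm_num), Set.uIcc_of_le (by norm_num)]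
    exact Icc_subset_Icc (by norm_num) le_rfl
  have hsplit : ∀ y : ℝ, y ^ (a + 1) * ∫ x in (0:ℝ)..1, x ^ a * (1 - x) ^ a * Real.exp (-(2 * y * x))
      = y ^ (a + 1) * (∫ x in (0:ℝ)..(1 / 2), x ^ a * (1 - x) ^ a * Real.exp (-(2 * y * x)))
       + y ^ (a + 1) * (∫ x in (1 / 2:ℝ)..1, x ^ a * (1 - x) ^ a * Real.exp (-(2 * y * x))) := by
    intro y
    rw [← mul_add, intervalIntegral.integral_add_adjacent_intervals
      ((hwe y).mono_set sub1) ((hwe y).mono_set sub2)]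
  simp_rw [hsplit]
  rw [← add_zero ((1 / 2 : ℝ) ^ (a + 1) * Real.Gamma (a + 1))]
  refine Tendsto.add ?_ ?_
  · -- main part
    set Φ : ℝ → ℝ → ℝ := fun y z => z ^ a * (1 - z / y) ^ a * Real.exp (-(2 * z)) with hΦ
    have hint : IntegrableOn (fun z : ℝ => z ^ a * Real.exp (-(2 * z))) (Ioi 0) := by
      have h := integrableOn_rpow_mul_exp_neg_mul_rpow (p := 1) (s := a) (b := 2)
        ha one_pos two_pos
      simpa only [Real.rpow_one, neg_mul] using h
    have hval := Real.integral_rpow_mul_exp_neg_mul_Ioi (a := a + 1) (r := 2) (by linarith) two_pos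
    rw [add_sub_cancel_right] at hval
    rw [← hval]
    have hT : Tendsto (fun y : ℝ => ∫ z in Ioi (0:ℝ), (Iic (y / 2)).indicator (Φ y) z) atTop
        (𝓝 (∫ z in Ioi (0:ℝ), z ^ a * Real.exp (-(2 * z)))) := by
      refine tendsto_integral_filter_of_dominated_convergence
        (fun z => 2 * (z ^ a * Real.exp (-(2 * z)))) ?_ ?_ (hint.const_mul 2) ?_
      · refine Filter.Eventually.of_forall fun y => ?_
        refine (Measurable.indicator ?_ measurableSet_Iic).aestronglyMeasurable
        simp only [hΦ]; fun_prop
      · filter_upwards [eventually_gt_atTop 0] with y hy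
        refine (ae_restrict_iff' measurableSet_Ioi).2 (Filter.Eventually.of_forall fun z hz => ?_)
        have hz' : (0:ℝ) < z := hz
        by_cases hzy : z ∈ Iic (y / 2)
        · rw [indicator_of_mem hzy]
          have hzy' : z ≤ y / 2 := hzy
          have h1 : z / y ≤ 1 / 2 := by rw [div_le_iff₀ hy]; linarith
          have h2 : 0 ≤ z / y := by positivity
          have h3 : 0 ≤ 1 - z / y := by linarith
          have h4 := rpow_le_two ha (u := 1 - z / y) (by linarith) (by linarith)
          simp only [hΦ]
          rw [Real.norm_of_nonneg (by positivity)]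
          calc z ^ a * (1 - z / y) ^ a * Real.exp (-(2 * z))
              ≤ z ^ a * 2 * Real.exp (-(2 * z)) := by gcongr
            _ = _ := by ring
        · rw [indicator_of_notMem hzy]
          simp only [norm_zero]
          positivity
      · refine (ae_restrict_iff' measurableSet_Ioi).2 (Filter.Eventually.of_forall fun z hz => ?_)
        have hz' : (0:ℝ) < z := hz
        have h1 : Tendsto (fun y : ℝ => Φ y z) atTop (𝓝 (z ^ a * Real.exp (-(2 * z)))) := by
          have h2 : Tendsto (fun y : ℝ => 1 - z / y) atTop (𝓝 (1 - 0)) :=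
            tendsto_const_nhds.sub (tendsto_const_nhds.div_atTop tendsto_id)
          rw [sub_zero] at h2
          have h3 := h2.rpow_const (p := a) (Or.inl one_ne_zero)
          rw [Real.one_rpow] at h3
          simpa using (h3.const_mul (z ^ a)).mul_const (Real.exp (-(2 * z)))
        refine h1.congr' ?_
        filter_upwards [eventually_ge_atTop (2 * z)] with y hy
        rw [indicator_of_mem]
        show z ≤ y / 2
        linarith
    refine hT.congr' ?_
    filter_upwards [eventually_gt_atTop 0] with y hy
    rw [setIntegral_indicator measurableSet_Iic, Ioi_inter_Iic,
      ← intervalIntegral.integral_of_le (by positivity)]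
    have h := intervalIntegral.integral_comp_mul_left (a := 0) (b := 1 / 2) (Φ y) hy.ne'
    rw [mul_zero, show y * (1 / 2) = y / 2 by ring, smul_eq_mul, eq_inv_mul_iff_mul_eq₀ hy.ne'] at h
    rw [← h, ← intervalIntegral.integral_const_mul, ← intervalIntegral.integral_const_mul]
    apply intervalIntegral.integral_congr
    intro x hx
    rw [Set.uIcc_of_le (by norm_num)] at hx
    simp only [hΦ]
    rw [mul_div_cancel_left₀ x hy.ne', Real.mul_rpow hy.le hx.1, Real.rpow_add_one hy.ne',
      mul_assoc 2 y x]
    ring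
  · have hz := (tendsto_rpow_mul_exp_neg_mul_atTop_nhds_zero (a + 1) 1 one_pos).mul_const
      (∫ x in (1 / 2:ℝ)..1, x ^ a * (1 - x) ^ a)
    rw [zero_mul] at hz
    refine squeeze_zero_norm' ?_ hz
    filter_upwards [eventually_gt_atTop 0] with y hy
    have hnn : ∀ x ∈ Icc (1 / 2 : ℝ) 1, 0 ≤ x ^ a * (1 - x) ^ a := by
      intro x hx
      have h1 : 0 ≤ 1 - x := by linarith [hx.2]
      have h0 : 0 ≤ x := by linarith [hx.1]
      positivity
    rw [Real.norm_of_nonneg]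
    · rw [mul_assoc]
      refine mul_le_mul_of_nonneg_left ?_ (by positivity)
      rw [← intervalIntegral.integral_const_mul]
      refine intervalIntegral.integral_mono_on (by norm_num) ((hwe y).mono_set sub2)
        ((hw.mono_set sub2).const_mul _) fun x hx => ?_
      rw [mul_comm]
      refine mul_le_mul_of_nonneg_right ?_ (hnn x hx)
      rw [Real.exp_le_exp]
      nlinarith [hx.1]
    · refine mul_nonneg (by positivity) (intervalIntegral.integral_nonneg (by norm_num) fun x hx => ?_)
      exact mul_nonneg (hnn x hx) (Real.exp_pos _).le

theorem stmt_10 (ν : ℝ) (hν : 0 < ν) :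
    Filter.Tendsto (fun t : ℝ => rBes ν 1 t / Real.sqrt t) (nhdsWithin 0 (Set.Ioi 0))
      (nhds (2 * ν / Real.sqrt (2 * Real.pi))) := by
  set L : ℝ → ℝ := fun y =>
    ∫ x in (0:ℝ)..1, x ^ (ν - 1 / 2) * (1 - x) ^ (ν - 1 / 2) * Real.exp (-(2 * y * x)) with hL
  set A : ℝ := (2:ℝ) ^ ν / (√π * Real.Gamma (ν + 1 / 2)) with hA
  set c : ℝ := ((2:ℝ) ^ ν * Real.Gamma (1 + ν))⁻¹ with hc
  set G : ℝ → ℝ := fun y => c * (y ^ (ν - 1) * Real.exp (-(1 / 2 * y))) - A * (y ^ (ν - 1) * L y)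
    with hG
  have g1 : 0 < Real.Gamma (ν + 1 / 2) := Real.Gamma_pos_of_pos (by linarith)
  have g2 : 0 < Real.Gamma (ν + 1) := Real.Gamma_pos_of_pos (by linarith)
  have hpi : 0 < √π := Real.sqrt_pos.2 Real.pi_pos
  have h2 : (0:ℝ) < 2 ^ ν := by positivity
  have hr : ∀ t : ℝ, 0 < t → rBes ν 1 t = ν * ∫ y in (0:ℝ)..t⁻¹, G y := by
    intro t ht
    rw [rBes, Real.one_rpow, mul_one, one_div]
    congr 1
    apply intervalIntegral.integral_congr_ae
    refine Filter.Eventually.of_forall fun y hy => ?_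
    rw [Set.uIoc_of_le (by positivity)] at hy
    have hy0 : 0 < y := hy.1
    have hb := bessel_rep hν hy0
    simp only [hG]
    rw [Real.rpow_sub_one hy0.ne']
    have e1 : Real.exp (-y / (2 * 1)) * Real.exp (-(1 * y) / 2) = Real.exp (-y) := by
      rw [← Real.exp_add]; congr 1; ring
    have e2 : Real.exp (-y / (2 * 1)) = Real.exp (-(1 / 2 * y)) := by congr 1; ring
    have e3 : y⁻¹ * Real.exp (-y / (2 * 1)) *
        (y ^ ν / ((2:ℝ) ^ ν * Real.Gamma (1 + ν)) - Real.exp (-(1 * y) / 2) * besselI ν y)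
        = y⁻¹ * Real.exp (-y / (2 * 1)) * (y ^ ν / ((2:ℝ) ^ ν * Real.Gamma (1 + ν)))
          - y⁻¹ * ((Real.exp (-y / (2 * 1)) * Real.exp (-(1 * y) / 2)) * besselI ν y) := by ring
    rw [e3, e1, hb, e2, div_eq_mul_inv (y ^ ν) (_ * _)]
    ring
  obtain ⟨hi, hv⟩ := h_int hν
  have ji : IntegrableOn (fun y : ℝ => y ^ (ν - 1) * Real.exp (-(1 / 2 * y))) (Ioi 0) := by
    have h := integrableOn_rpow_mul_exp_neg_mul_rpow (p := 1) (s := ν - 1) (b := 1 / 2)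
      (by linarith) one_pos (by norm_num)
    simpa only [Real.rpow_one, neg_mul] using h
  have jv := Real.integral_rpow_mul_exp_neg_mul_Ioi (a := ν) (r := 1 / 2) hν (by norm_num)
  have Gi : IntegrableOn G (Ioi 0) := (ji.const_mul c).sub (hi.const_mul A)
  have Gv : ∫ y in Ioi (0:ℝ), G y = 0 := by
    simp only [hG]
    rw [integral_sub (ji.const_mul c) (hi.const_mul A), integral_const_mul, integral_const_mul,
      hv, jv, hc, hA, one_div_one_div, Real.div_rpow zero_le_one zero_le_two, Real.one_rpow,
      add_comm 1 ν]
    field_simp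
    ring
  have Gc : ContinuousOn G (Ioi 0) := by
    have hp : ContinuousOn (fun y : ℝ => y ^ (ν - 1)) (Ioi 0) := fun y hy =>
      (Real.continuousAt_rpow_const y _ (Or.inl (ne_of_gt hy))).continuousWithinAt
    exact (continuousOn_const.mul (hp.mul (by fun_prop))).sub
      (continuousOn_const.mul (hp.mul (lap_cont hν)))
  have main : Tendsto (fun T : ℝ => (ν * ∫ y in (0:ℝ)..T, G y) / T ^ (-(1 / 2) : ℝ)) atTop
      (𝓝 (2 * ν / √(2 * π))) := by
    refine HasDerivAt.lhopital_zero_atTop (f' := fun T => ν * G T)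
      (g' := fun T => (-(1 / 2)) * T ^ (-(1 / 2) - 1 : ℝ)) ?_ ?_ ?_ ?_ ?_ ?_
    · filter_upwards [eventually_gt_atTop 0] with T hT
      refine HasDerivAt.const_mul ν ?_
      refine intervalIntegral.integral_hasDerivAt_right ?_ ?_ ?_
      · rw [intervalIntegrable_iff_integrableOn_Ioc_of_le hT.le]
        exact Gi.mono_set Ioc_subset_Ioi_self
      · exact Gc.stronglyMeasurableAtFilter isOpen_Ioi T hT
      · exact Gc.continuousAt (Ioi_mem_nhds hT)
    · filter_upwards [eventually_gt_atTop 0] with T hT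
      exact Real.hasDerivAt_rpow_const (Or.inl hT.ne')
    · filter_upwards [eventually_gt_atTop 0] with T hT
      have : 0 < T ^ (-(1 / 2) - 1 : ℝ) := by positivity
      exact mul_ne_zero (by norm_num) this.ne'
    · have := (intervalIntegral_tendsto_integral_Ioi 0 Gi tendsto_id).const_mul ν
      rw [Gv, mul_zero] at this
      exact this
    · exact tendsto_rpow_neg_atTop (by norm_num)
    · have l1 := lap_lim hν
      have l2 := tendsto_rpow_mul_exp_neg_mul_atTop_nhds_zero (ν + 1 / 2) (1 / 2) (by norm_num)
      have l3 := ((l2.const_mul c).sub (l1.const_mul A)).const_mul (-(2 * ν))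
      have lim : -(2 * ν) * (c * 0 - A * ((1 / 2) ^ (ν + 1 / 2) * Real.Gamma (ν + 1 / 2)))
          = 2 * ν / √(2 * π) := by
        rw [hA, Real.div_rpow zero_le_one zero_le_two, Real.one_rpow, Real.rpow_add two_pos,
          ← Real.sqrt_eq_rpow, Real.sqrt_mul zero_le_two]
        field_simp
        ring
      rw [lim] at l3
      refine l3.congr' ?_
      filter_upwards [eventually_gt_atTop 0] with T hT
      simp only [hG]
      have hq : 0 < T ^ (-(1 / 2) - 1 : ℝ) := by positivity
      have e : T ^ (ν - 1) = T ^ (ν + 1 / 2) * T ^ (-(1 / 2) - 1 : ℝ) := by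
        rw [← Real.rpow_add hT]; congr 1; ring
      rw [e, eq_div_iff (mul_ne_zero (by norm_num) hq.ne'), neg_mul (1 / 2) T]
      ring
  have hcomp := main.comp tendsto_inv_nhdsGT_zero
  refine hcomp.congr' ?_
  filter_upwards [self_mem_nhdsWithin] with t ht
  have ht' : (0:ℝ) < t := ht
  simp only [Function.comp]
  rw [hr t ht', Real.inv_rpow ht'.le, Real.rpow_neg ht'.le, inv_inv, ← Real.sqrt_eq_rpow]
end
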